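/- Let 0 < α < 1, κ ≥ 0 and λ ∈ ℝ with λ ≠ 0. Then Im(iλ (κ + iλ)^{α−1}) = (sin(απ)/π) · λ · ∫_ℝ |y|^{2α−1} (y²+κ) / ((y²+κ)² + λ²) dy, and in particular λ · Im(iλ (κ + iλ)^{α−1}) > 0; hence Im(iλ (κ + iλ)^{α−1}) ≠ 0. -/

import Mathlib

open MeasureTheory Real

/-!
With `z = κ + iλ`, `Im(iλ z^(α-1)) = λ Re(z^(α-1))`, so the integral formula is the real part of the
Stieltjes representation
`∫₀^∞ t^(α-1) / (t + z) dt = (π / sin(πα)) z^(α-1)`,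
after the substitution `t = y²` (`integral_abs_rpow_comp_sq`).

For real `z > 0` the representation follows from writing `1 / (t + z)` as a Laplace integral,
exchanging the integrals, and applying the reflection formula for `Γ` (`integral_rpow_div_add`).
Both sides are holomorphic in `z` on the open right half-plane, so the identity theorem extends it
there (`integral_stieltjes`). The boundary case `κ = 0` is reached by letting `κ` decrease to `0`
by dominated convergence (`integral_re_of_nonneg`).

Positivity does not use the integral: `|arg z| ≤ π/2` and `|α - 1| < 1` put the argument of
`z^(α-1)` strictly between `-π/2` and `π/2` (`cpow_re_pos`).
-/

lemma integrableOn_rpow_div_add {α x : ℝ} (hα0 : 0 < α) (hα1 : α < 1) (hx : 0 < x) :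
    IntegrableOn (fun t : ℝ => t ^ (α - 1) / (t + x)) (Set.Ioi 0) := by
  have h := (integrableOn_rpowIntegrand₀₁_Ioi (p := α) ⟨hα0, hα1⟩ hx.le).congr_fun
    (rpowIntegrand₀₁_eqOn_pow_div ⟨hα0, hα1⟩ hx.le) measurableSet_Ioi
  refine IntegrableOn.congr_fun (Integrable.const_mul h x⁻¹) (fun t _ => ?_) measurableSet_Ioi
  field_simp

/-- The Stieltjes representation at a positive real point. Fubini is applied to
`t^(α-1) e^{-(t+x)s}`: integrating in `s` first gives the left side, in `t` first gives
`Γ(α) Γ(1-α) x^(α-1)`. -/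
lemma integral_rpow_div_add {α x : ℝ} (hα0 : 0 < α) (hα1 : α < 1) (hx : 0 < x) :
    ∫ t in Set.Ioi (0 : ℝ), t ^ (α - 1) / (t + x) = π / sin (π * α) * x ^ (α - 1) := by
  have hinner : ∀ t ∈ Set.Ioi (0 : ℝ),
      ∫ s in Set.Ioi (0 : ℝ), t ^ (α - 1) * rexp (-(t + x) * s) = t ^ (α - 1) / (t + x) := by
    intro t ht
    have ht : 0 < t := ht
    have htx : t + x ≠ 0 := by positivity
    rw [integral_const_mul, integral_exp_mul_Ioi (by linarith)]
    simp [div_eq_mul_inv, -neg_add_rev, inv_neg, add_comm]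
  have hint : Integrable (Function.uncurry fun t s : ℝ => t ^ (α - 1) * rexp (-(t + x) * s))
      ((volume.restrict (Set.Ioi 0)).prod (volume.restrict (Set.Ioi 0))) := by
    rw [integrable_prod_iff]
    · refine ⟨?_, ?_⟩
      · filter_upwards [ae_restrict_mem measurableSet_Ioi] with t ht
        have ht : 0 < t := ht
        have hexp := integrableOn_exp_mul_Ioi (by linarith : -(t + x) < 0) 0
        exact Integrable.const_mul hexp (t ^ (α - 1))
      · refine (integrableOn_rpow_div_add hα0 hα1 hx).congr_fun (fun t ht => ?_) measurableSet_Ioi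
        have ht' : 0 < t := ht
        simp only [Function.uncurry]
        rw [← hinner t ht]
        refine integral_congr_ae (ae_of_all _ fun s => ?_)
        simp only
        rw [Real.norm_of_nonneg (by positivity)]
    · exact Measurable.aestronglyMeasurable (by unfold Function.uncurry; fun_prop)
  calc ∫ t in Set.Ioi (0 : ℝ), t ^ (α - 1) / (t + x)
      = ∫ t in Set.Ioi (0 : ℝ), ∫ s in Set.Ioi (0 : ℝ), t ^ (α - 1) * rexp (-(t + x) * s) :=
        (setIntegral_congr_fun measurableSet_Ioi hinner).symm
    _ = ∫ s in Set.Ioi (0 : ℝ), ∫ t in Set.Ioi (0 : ℝ), t ^ (α - 1) * rexp (-(t + x) * s) :=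
        integral_integral_swap hint
    _ = ∫ s in Set.Ioi (0 : ℝ), Gamma α * (s ^ ((1 - α) - 1) * rexp (-(x * s))) := by
        refine setIntegral_congr_fun measurableSet_Ioi fun s hs => ?_
        have hs : 0 < s := hs
        have h1 : ∀ t : ℝ, t ^ (α - 1) * rexp (-(t + x) * s)
            = rexp (-(x * s)) * (t ^ (α - 1) * rexp (-(s * t))) := fun t => by
          rw [mul_left_comm, ← Real.exp_add]; ring_nf
        simp only [h1]
        rw [integral_const_mul, integral_rpow_mul_exp_neg_mul_Ioi hα0 hs, one_div,
          Real.inv_rpow hs.le, ← Real.rpow_neg hs.le, sub_sub_cancel_left]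
        ring
    _ = Gamma α * Gamma (1 - α) * x ^ (α - 1) := by
        rw [integral_const_mul, integral_rpow_mul_exp_neg_mul_Ioi (by linarith) hx, one_div,
          Real.inv_rpow hx.le, ← Real.rpow_neg hx.le, neg_sub]
        ring
    _ = _ := by rw [Real.Gamma_mul_Gamma_one_sub]

lemma add_re_le_norm_ofReal_add (t : ℝ) (z : ℂ) : t + z.re ≤ ‖(t : ℂ) + z‖ := by
  simpa using Complex.re_le_norm ((t : ℂ) + z)

lemma aestronglyMeasurable_stieltjes (α : ℝ) (z : ℂ) (n : ℕ) (μ : Measure ℝ) :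
    AEStronglyMeasurable (fun t : ℝ => ((t ^ (α - 1) : ℝ) : ℂ) / ((t : ℂ) + z) ^ n) μ :=
  Measurable.aestronglyMeasurable (by fun_prop)

lemma integrableOn_stieltjes {α : ℝ} (hα0 : 0 < α) (hα1 : α < 1) {z : ℂ} (hz : 0 < z.re) :
    IntegrableOn (fun t : ℝ => ((t ^ (α - 1) : ℝ) : ℂ) / ((t : ℂ) + z)) (Set.Ioi 0) := by
  refine (integrableOn_rpow_div_add hα0 hα1 hz).mono'
    (by simpa using aestronglyMeasurable_stieltjes α z 1 _) ?_
  filter_upwards [ae_restrict_mem measurableSet_Ioi] with t ht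
  have ht : 0 < t := ht
  rw [norm_div, Complex.norm_real, Real.norm_of_nonneg (by positivity)]
  gcongr
  exact add_re_le_norm_ofReal_add t z

lemma differentiableAt_stieltjes {α : ℝ} (hα0 : 0 < α) (hα1 : α < 1) {z : ℂ} (hz : 0 < z.re) :
    DifferentiableAt ℂ
      (fun w : ℂ => ∫ t in Set.Ioi (0 : ℝ), ((t ^ (α - 1) : ℝ) : ℂ) / ((t : ℂ) + w)) z := by
  set δ := z.re / 2 with hδ
  have hδ0 : 0 < δ := by positivity
  have hU : {w : ℂ | δ < w.re} ∈ nhds z :=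
    (isOpen_lt continuous_const Complex.continuous_re).mem_nhds
      (show z.re / 2 < z.re by linarith)
  refine (hasDerivAt_integral_of_dominated_loc_of_deriv_le (μ := volume.restrict (Set.Ioi 0))
    (F := fun w t => ((t ^ (α - 1) : ℝ) : ℂ) / ((t : ℂ) + w))
    (F' := fun w t => -(((t ^ (α - 1) : ℝ) : ℂ) / ((t : ℂ) + w) ^ 2))
    (bound := fun t => δ⁻¹ * (t ^ (α - 1) / (t + δ))) hU
    (Filter.Eventually.of_forall fun w => by simpa using aestronglyMeasurable_stieltjes α w 1 _)
    (integrableOn_stieltjes hα0 hα1 hz) (aestronglyMeasurable_stieltjes α z 2 _).neg ?_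
    ((integrableOn_rpow_div_add hα0 hα1 hδ0).const_mul _) ?_).2.differentiableAt
  · filter_upwards [ae_restrict_mem measurableSet_Ioi] with t ht w hw
    have ht : 0 < t := ht
    have hw : δ < w.re := hw
    have h1 : t + δ ≤ ‖(t : ℂ) + w‖ := by linarith [add_re_le_norm_ofReal_add t w]
    have h2 : δ ≤ ‖(t : ℂ) + w‖ := by linarith
    rw [norm_neg, norm_div, norm_pow, Complex.norm_real, Real.norm_of_nonneg (by positivity)]
    calc t ^ (α - 1) / ‖(t : ℂ) + w‖ ^ 2 ≤ t ^ (α - 1) / (δ * (t + δ)) := by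
          rw [pow_two]; gcongr
      _ = δ⁻¹ * (t ^ (α - 1) / (t + δ)) := by field_simp
  · filter_upwards [ae_restrict_mem measurableSet_Ioi] with t ht w hw
    have ht : 0 < t := ht
    have hw : δ < w.re := hw
    have h0 : (t : ℂ) + w ≠ 0 := fun h => by
      have := congrArg Complex.re h
      simp at this
      linarith
    have := ((hasDerivAt_id w).const_add (t : ℂ)).inv h0
    simpa [div_eq_mul_inv] using this.const_mul ((t ^ (α - 1) : ℝ) : ℂ)

/-- The Stieltjes representation of `z^(α-1)` on the open right half-plane, by the identity theorem
from the positive real axis. -/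
lemma integral_stieltjes {α : ℝ} (hα0 : 0 < α) (hα1 : α < 1) {z : ℂ} (hz : 0 < z.re) :
    ∫ t in Set.Ioi (0 : ℝ), ((t ^ (α - 1) : ℝ) : ℂ) / ((t : ℂ) + z)
      = ((π / sin (π * α) : ℝ) : ℂ) * z ^ ((α : ℂ) - 1) := by
  have hopen : IsOpen {w : ℂ | 0 < w.re} := isOpen_lt continuous_const Complex.continuous_re
  refine AnalyticOnNhd.eqOn_of_preconnected_of_frequently_eq (z₀ := 1) (U := {w : ℂ | 0 < w.re})
    (f := fun w : ℂ => ∫ t in Set.Ioi (0 : ℝ), ((t ^ (α - 1) : ℝ) : ℂ) / ((t : ℂ) + w))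
    (g := fun w : ℂ => ((π / sin (π * α) : ℝ) : ℂ) * w ^ ((α : ℂ) - 1))
    ?_ ?_ (convex_halfSpace_re_gt 0).isPreconnected (by simp) ?_ hz
  · exact DifferentiableOn.analyticOnNhd
      (fun w hw => (differentiableAt_stieltjes hα0 hα1 hw).differentiableWithinAt) hopen
  · refine DifferentiableOn.analyticOnNhd (fun w hw => ?_) hopen
    exact ((differentiableAt_id.cpow_const (Or.inl hw)).const_mul _).differentiableWithinAt
  -- the two sides agree on the reals `x > 1`, which accumulate at `1`
  · have htend : Filter.Tendsto (fun x : ℝ => (x : ℂ)) (nhdsWithin 1 (Set.Ioi 1))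
        (nhdsWithin 1 {1}ᶜ) := by
      refine tendsto_nhdsWithin_iff.2 ⟨?_, ?_⟩
      · exact (Complex.continuous_ofReal.tendsto' 1 1 (by simp)).mono_left nhdsWithin_le_nhds
      · filter_upwards [self_mem_nhdsWithin] with x hx
        have hx : 1 < x := hx
        simpa using hx.ne'
    refine htend.frequently (Filter.Eventually.frequently ?_)
    filter_upwards [self_mem_nhdsWithin] with x hx
    have hx : 0 < x := lt_trans one_pos hx
    have h := congrArg (fun r : ℝ => (r : ℂ)) (integral_rpow_div_add hα0 hα1 hx)
    simp only [← integral_complex_ofReal, Complex.ofReal_mul, Complex.ofReal_cpow hx.le] at h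
    simpa using h

lemma re_stieltjes_kernel (r t κ lam : ℝ) :
    ((r : ℂ) / ((t : ℂ) + (κ + Complex.I * lam))).re = r * (t + κ) / ((t + κ) ^ 2 + lam ^ 2) := by
  rw [Complex.div_re]
  simp [Complex.normSq_apply, pow_two]

lemma integral_re_of_pos {α κ : ℝ} (lam : ℝ) (hα0 : 0 < α) (hα1 : α < 1) (hκ : 0 < κ) :
    ∫ t in Set.Ioi (0 : ℝ), t ^ (α - 1) * (t + κ) / ((t + κ) ^ 2 + lam ^ 2)
      = π / sin (π * α) * (((κ : ℂ) + Complex.I * lam) ^ ((α : ℂ) - 1)).re := by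
  have hz : 0 < ((κ : ℂ) + Complex.I * lam).re := by simpa using hκ
  have h := integral_re (integrableOn_stieltjes hα0 hα1 hz)
  rw [integral_stieltjes hα0 hα1 hz] at h
  simp only [RCLike.re_to_complex, re_stieltjes_kernel, Complex.re_ofReal_mul] at h
  exact h

lemma add_I_mul_mem_slitPlane (κ : ℝ) {lam : ℝ} (hlam : lam ≠ 0) :
    (κ : ℂ) + Complex.I * lam ∈ Complex.slitPlane := by
  right; simpa using hlam

/-- Extends `integral_re_of_pos` to `κ = 0`, where `z` lies on the imaginary axis: both sides are
right-continuous in `κ`, since `λ ≠ 0` keeps `z` off the branch cut and the denominator positive. -/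
lemma integral_re_of_nonneg {α κ lam : ℝ} (hα0 : 0 < α) (hα1 : α < 1) (hκ : 0 ≤ κ)
    (hlam : lam ≠ 0) :
    ∫ t in Set.Ioi (0 : ℝ), t ^ (α - 1) * (t + κ) / ((t + κ) ^ 2 + lam ^ 2)
      = π / sin (π * α) * (((κ : ℂ) + Complex.I * lam) ^ ((α : ℂ) - 1)).re := by
  have hpos : ∀ x : ℝ, 0 < x ^ 2 + lam ^ 2 := fun x => by positivity
  have hL : Filter.Tendsto
      (fun k : ℝ => ∫ t in Set.Ioi (0 : ℝ), t ^ (α - 1) * (t + k) / ((t + k) ^ 2 + lam ^ 2))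
      (nhdsWithin κ (Set.Ioi κ))
      (nhds (∫ t in Set.Ioi (0 : ℝ), t ^ (α - 1) * (t + κ) / ((t + κ) ^ 2 + lam ^ 2))) := by
    refine tendsto_integral_filter_of_dominated_convergence
      (fun t => 2 * (t ^ (α - 1) / (t + |lam|)))
      (Filter.Eventually.of_forall fun k => Measurable.aestronglyMeasurable (by fun_prop)) ?_
      ((integrableOn_rpow_div_add hα0 hα1 (abs_pos.2 hlam)).const_mul 2) ?_
    · filter_upwards [self_mem_nhdsWithin] with k hk
      filter_upwards [ae_restrict_mem measurableSet_Ioi] with t ht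
      have ht : 0 < t := ht
      have hk : 0 < k := lt_of_le_of_lt hκ hk
      have hl := abs_pos.2 hlam
      have hker : (t + k) / ((t + k) ^ 2 + lam ^ 2) ≤ 2 / (t + |lam|) := by
        rw [div_le_div_iff₀ (hpos _) (by positivity), ← sq_abs lam]
        nlinarith [sq_nonneg (t + k - |lam|), mul_pos hk hl, mul_pos ht hk]
      rw [Real.norm_of_nonneg (by positivity), mul_div_assoc]
      calc t ^ (α - 1) * ((t + k) / ((t + k) ^ 2 + lam ^ 2))
          ≤ t ^ (α - 1) * (2 / (t + |lam|)) := by gcongr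
        _ = 2 * (t ^ (α - 1) / (t + |lam|)) := by ring
    · refine ae_of_all _ fun t => ?_
      refine (Continuous.tendsto ?_ κ).mono_left nhdsWithin_le_nhds
      exact Continuous.div (by fun_prop) (by fun_prop) fun k => (hpos _).ne'
  have hR : Filter.Tendsto
      (fun k : ℝ => π / sin (π * α) * (((k : ℂ) + Complex.I * lam) ^ ((α : ℂ) - 1)).re)
      (nhdsWithin κ (Set.Ioi κ))
      (nhds (π / sin (π * α) * (((κ : ℂ) + Complex.I * lam) ^ ((α : ℂ) - 1)).re)) := by
    have hc : ContinuousAt (fun k : ℝ => ((k : ℂ) + Complex.I * lam) ^ ((α : ℂ) - 1)) κ :=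
      ContinuousAt.cpow (by fun_prop) continuousAt_const (add_I_mul_mem_slitPlane κ hlam)
    exact ((Complex.continuous_re.continuousAt.comp hc).const_mul _).tendsto.mono_left
      nhdsWithin_le_nhds
  refine tendsto_nhds_unique hL (hR.congr' ?_)
  filter_upwards [self_mem_nhdsWithin] with k hk
  exact (integral_re_of_pos lam hα0 hα1 (lt_of_le_of_lt hκ hk)).symm

/-- The substitution `t = y²` on each half-line. No integrability is needed: both sides are `0`
together when the integrals diverge. -/
lemma integral_abs_rpow_comp_sq (α : ℝ) (g : ℝ → ℝ) :
    ∫ y : ℝ, |y| ^ (2 * α - 1) * g (y ^ 2) = ∫ t in Set.Ioi (0 : ℝ), t ^ (α - 1) * g t := by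
  rw [← integral_comp_rpow_Ioi_of_pos (p := 2) two_pos]
  have h := integral_comp_abs (f := fun y : ℝ => y ^ (2 * α - 1) * g (y ^ 2))
  simp only [sq_abs] at h
  rw [h, ← integral_const_mul]
  refine setIntegral_congr_fun measurableSet_Ioi fun y hy => ?_
  have hy : 0 < y := hy
  simp only [smul_eq_mul]
  rw [← Real.rpow_mul hy.le, Real.rpow_two, show 2 * α - 1 = (2 - 1) + 2 * (α - 1) by ring,
    Real.rpow_add hy]
  ring

lemma cpow_re_pos {α κ lam : ℝ} (hα0 : 0 < α) (hα1 : α < 1) (hκ : 0 ≤ κ) (hlam : lam ≠ 0) :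
    0 < (((κ : ℂ) + Complex.I * lam) ^ ((α : ℂ) - 1)).re := by
  set z : ℂ := (κ : ℂ) + Complex.I * lam with hz
  have hz0 : z ≠ 0 := Complex.slitPlane_ne_zero (add_I_mul_mem_slitPlane κ hlam)
  have harg : |z.arg| ≤ π / 2 := Complex.abs_arg_le_pi_div_two_iff.2 (by simpa [hz] using hκ)
  rw [Complex.cpow_def_of_ne_zero hz0, Complex.exp_re]
  refine mul_pos (exp_pos _) (cos_pos_of_mem_Ioo (abs_lt.1 ?_))
  have him : (Complex.log z * ((α : ℂ) - 1)).im = z.arg * (α - 1) := by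
    simp [Complex.mul_im, Complex.log_im]
  rw [him, abs_mul, abs_of_neg (by linarith : α - 1 < 0)]
  nlinarith [abs_nonneg z.arg, pi_pos]

/-- the imaginary part of the fractional damping symbol:
`Im(iλ (κ + iλ)^(α-1)) = (sin(απ)/π) λ ∫_ℝ |y|^(2α-1)(y²+κ)/((y²+κ)²+λ²) dy`,
`λ · Im(...) > 0`, hence `Im(...) ≠ 0`. -/
theorem stmt7 (α κ lam : ℝ) (hα0 : 0 < α) (hα1 : α < 1) (hκ : 0 ≤ κ) (hlam : lam ≠ 0) :
    (Complex.I * (lam : ℂ) * ((κ : ℂ) + Complex.I * (lam : ℂ)) ^ ((α : ℂ) - 1)).im =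
      (Real.sin (α * π) / π) * lam *
        ∫ y : ℝ, |y| ^ (2 * α - 1) * (y ^ 2 + κ) / ((y ^ 2 + κ) ^ 2 + lam ^ 2) ∧
    0 < lam * (Complex.I * (lam : ℂ) * ((κ : ℂ) + Complex.I * (lam : ℂ)) ^ ((α : ℂ) - 1)).im ∧
    (Complex.I * (lam : ℂ) * ((κ : ℂ) + Complex.I * (lam : ℂ)) ^ ((α : ℂ) - 1)).im ≠ 0 := by
  have him : (Complex.I * (lam : ℂ) * ((κ : ℂ) + Complex.I * (lam : ℂ)) ^ ((α : ℂ) - 1)).im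
      = lam * (((κ : ℂ) + Complex.I * (lam : ℂ)) ^ ((α : ℂ) - 1)).re := by
    rw [Complex.mul_im]; simp
  have hre := cpow_re_pos hα0 hα1 hκ hlam
  rw [him]
  refine ⟨?_, ?_, mul_ne_zero hlam hre.ne'⟩
  · have hsin : 0 < sin (π * α) := sin_pos_of_pos_of_lt_pi (by positivity) (by nlinarith [pi_pos])
    have h := integral_abs_rpow_comp_sq α (fun t => (t + κ) / ((t + κ) ^ 2 + lam ^ 2))
    simp only [mul_div_assoc'] at h
    rw [h, integral_re_of_nonneg hα0 hα1 hκ hlam, mul_comm α π]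
    field_simp
  · rw [← mul_assoc]
    exact mul_pos (mul_self_pos.2 hlam) hre
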